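/- Let k be a field, let 1 ≤ d₁ ≤ d₂ be integers, let F, G ∈ k[X₀,X₁] be homogeneous polynomials of degrees d₁ and d₂, and let (λ,μ) ≠ (0,0) in k². Then there exist homogeneous polynomials Q of degree d₂−d₁ and R of degree d₁−1 such that F(λ,μ)^{d₂−d₁+1}·G = F·Q + (λX₁ − μX₀)^{d₂−d₁+1}·R, where F(λ,μ) denotes the value of F at (X₀,X₁) = (λ,μ). Moreover, if F(λ,μ) ≠ 0, the pair (Q,R) is unique. -/

import Mathlib

/-!
Existence. Write `ℓ = λX₁ - μX₀` and fix a linear form `L` with `L(λ,μ) = 1`. Modulo `ℓ` one has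
`X₀ ≡ λL` and `X₁ ≡ μL`, so a form `P` of degree `d` satisfies `P ≡ P(λ,μ)·L^d`; hence a form
vanishing at `(λ,μ)` is `ℓ` times a form of degree one less (`exists_eq_ell_mul`). If
`n = d₂ - d₁`, the form `F(λ,μ)·G - G(λ,μ)·F·L^n` vanishes at `(λ,μ)`, so it is `ℓ·G'` with
`deg G' = d₂ - 1`; induction on `n` applied to `G'` gives `Q` and `R` (`exists_division`). No
condition on `F(λ,μ)` is needed for this.

Uniqueness. The difference of two solutions satisfies `F·Q = ℓ^(n+1)·R` with `deg Q = n`. If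
`F(λ,μ) ≠ 0`, then `Q` vanishes at `(λ,μ)`, so a factor `ℓ` can be split off `Q` and cancelled;
after `n` such steps `Q` is a constant vanishing at a point, so `Q = 0` (`eq_zero_of_mul_eq`).
-/

open MvPolynomial

noncomputable section

/-- The value of a binary form at the point `(λ, μ)`. -/
def evalPt (k : Type) [Field k] (lam mu : k) (P : MvPolynomial (Fin 2) k) : k :=
  eval (fun t : Fin 2 => if t = 0 then lam else mu) P

/-- The linear form `λX₁ - μX₀` cutting out the point `(λ, μ)`. -/
def ell {k : Type} [Field k] (lam mu : k) : MvPolynomial (Fin 2) k :=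
  C lam * X 1 - C mu * X 0

section Aux

variable {k : Type} [Field k] {lam mu : k}

theorem ell_isHomogeneous : (ell lam mu).IsHomogeneous 1 :=
  (isHomogeneous_C_mul_X _ _).sub (isHomogeneous_C_mul_X _ _)

theorem evalPt_ell : evalPt k lam mu (ell lam mu) = 0 := by
  simp [evalPt, ell, mul_comm]

theorem ell_ne_zero (hlm : (lam, mu) ≠ (0, 0)) : ell lam mu ≠ 0 := by
  intro h
  apply hlm
  have h0 := congrArg (evalPt k 1 0) h
  have h1 := congrArg (evalPt k 0 1) h
  simp [evalPt, ell] at h0 h1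
  simp [h0, h1]

theorem evalPt_add (P Q : MvPolynomial (Fin 2) k) :
    evalPt k lam mu (P + Q) = evalPt k lam mu P + evalPt k lam mu Q := map_add _ _ _

theorem evalPt_sub (P Q : MvPolynomial (Fin 2) k) :
    evalPt k lam mu (P - Q) = evalPt k lam mu P - evalPt k lam mu Q := map_sub _ _ _

theorem evalPt_mul (P Q : MvPolynomial (Fin 2) k) :
    evalPt k lam mu (P * Q) = evalPt k lam mu P * evalPt k lam mu Q := map_mul _ _ _

theorem evalPt_pow (P : MvPolynomial (Fin 2) k) (n : ℕ) :
    evalPt k lam mu (P ^ n) = evalPt k lam mu P ^ n := map_pow _ _ _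

theorem evalPt_C (a : k) : evalPt k lam mu (C a) = a := eval_C _

theorem exists_linear_form (hlm : (lam, mu) ≠ (0, 0)) :
    ∃ a b : k, a * lam + b * mu = 1 := by
  by_cases h : lam = 0
  · have hm : mu ≠ 0 := fun h' => hlm (by rw [h, h'])
    exact ⟨0, mu⁻¹, by simp [hm]⟩
  · exact ⟨lam⁻¹, 0, by simp [h]⟩

/-- A form of degree `d` evaluated at `(p₀t, p₁t, …)` is `t ^ d` times its value at `p`, for `t` in
any algebra over the coefficients. -/
theorem aeval_mul_of_isHomogeneous {σ A : Type} [CommRing A] [Algebra k A]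
    {P : MvPolynomial σ k} {d : ℕ} (hP : P.IsHomogeneous d) (p : σ → k) (t : A) :
    aeval (fun i => algebraMap k A (p i) * t) P = algebraMap k A (eval p P) * t ^ d := by
  rw [aeval_def, eval₂_eq, eval_eq, map_sum, Finset.sum_mul]
  refine Finset.sum_congr rfl fun m hm => ?_
  rw [hP.degree_eq_sum_deg_support hm, ← Finset.prod_pow_eq_pow_sum]
  simp only [mul_pow, Finset.prod_mul_distrib, map_mul, map_prod, map_pow, mul_assoc]

/-- Modulo `λX₁ - μX₀` the point `(X₀, X₁)` is the multiple of `(λ, μ)` by the linear form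
`L = aX₀ + bX₁`, so a form of degree `d` is congruent to its value at `(λ, μ)` times `L ^ d`. -/
theorem ell_dvd_sub {a b : k} (hab : a * lam + b * mu = 1)
    {P : MvPolynomial (Fin 2) k} {d : ℕ} (hP : P.IsHomogeneous d) :
    ell lam mu ∣ P - C (evalPt k lam mu P) * (C a * X 0 + C b * X 1) ^ d := by
  rw [← Ideal.mem_span_singleton, ← Ideal.Quotient.eq]
  set I := Ideal.span {ell lam mu} with hI
  have hC : (C a * C lam + C b * C mu : MvPolynomial (Fin 2) k) = 1 := by
    rw [← C_mul, ← C_mul, ← C_add, hab, C_1]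
  have key : (Ideal.Quotient.mkₐ k I : MvPolynomial (Fin 2) k →ₐ[k] _) =
      aeval (fun i : Fin 2 =>
        algebraMap k (MvPolynomial (Fin 2) k ⧸ I) (if i = 0 then lam else mu) *
          Ideal.Quotient.mk I (C a * X 0 + C b * X 1)) := by
    apply MvPolynomial.algHom_ext
    intro i
    have hmk : ∀ r : k, algebraMap k (MvPolynomial (Fin 2) k ⧸ I) r =
        Ideal.Quotient.mk I (C r) := fun _ => rfl
    rw [aeval_X, Ideal.Quotient.mkₐ_eq_mk, hmk, ← map_mul, Ideal.Quotient.eq, hI,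
      Ideal.mem_span_singleton]
    fin_cases i
    · refine ⟨-C b, ?_⟩
      simp only [ell, Fin.zero_eta, if_true]
      linear_combination (-X 0 : MvPolynomial (Fin 2) k) * hC
    · refine ⟨C a, ?_⟩
      simp only [ell, Fin.mk_one, one_ne_zero, if_false]
      linear_combination (-X 1 : MvPolynomial (Fin 2) k) * hC
  have := aeval_mul_of_isHomogeneous hP (fun i : Fin 2 => if i = 0 then lam else mu)
    (Ideal.Quotient.mk I (C a * X 0 + C b * X 1))
  rw [← key] at this
  rw [map_mul, map_pow]
  exact this

attribute [local instance] MvPolynomial.gradedAlgebra in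
/-- A quotient of forms can be taken to be a form. -/
theorem exists_isHomogeneous_of_dvd {l P : MvPolynomial (Fin 2) k} {d : ℕ}
    (hl : l.IsHomogeneous 1) (hP : P.IsHomogeneous (d + 1)) (h : l ∣ P) :
    ∃ P' : MvPolynomial (Fin 2) k, P'.IsHomogeneous d ∧ P = l * P' := by
  obtain ⟨S, hS⟩ := h
  refine ⟨homogeneousComponent d S, homogeneousComponent_isHomogeneous _ _, ?_⟩
  have := DirectSum.coe_decompose_mul_add_of_left_mem (homogeneousSubmodule (Fin 2) k)
    (i := 1) (j := d) (b := S) ((mem_homogeneousSubmodule _ _).2 hl)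
  rw [← hS, add_comm 1 d, DirectSum.decompose_of_mem_same _
    ((mem_homogeneousSubmodule _ _).2 hP)] at this
  rw [this]
  congr 1
  exact decomposition.decompose'_apply S d

/-- A form of positive degree vanishing at `(λ, μ)` is divisible by `λX₁ - μX₀`, with a form as
quotient. -/
theorem exists_eq_ell_mul (hlm : (lam, mu) ≠ (0, 0)) {P : MvPolynomial (Fin 2) k} {d : ℕ}
    (hP : P.IsHomogeneous (d + 1)) (h : evalPt k lam mu P = 0) :
    ∃ P' : MvPolynomial (Fin 2) k, P'.IsHomogeneous d ∧ P = ell lam mu * P' := by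
  obtain ⟨a, b, hab⟩ := exists_linear_form hlm
  refine exists_isHomogeneous_of_dvd ell_isHomogeneous hP ?_
  have := ell_dvd_sub hab hP
  rwa [h, C_0, zero_mul, sub_zero] at this

/-- Existence of the division, with `deg F = e + 1` and `deg G = e + 1 + n`. -/
theorem exists_division (hlm : (lam, mu) ≠ (0, 0)) {F : MvPolynomial (Fin 2) k} {e : ℕ}
    (hF : F.IsHomogeneous (e + 1)) (n : ℕ) :
    ∀ G : MvPolynomial (Fin 2) k, G.IsHomogeneous (e + 1 + n) →
      ∃ Q R : MvPolynomial (Fin 2) k, Q.IsHomogeneous n ∧ R.IsHomogeneous e ∧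
        C (evalPt k lam mu F) ^ (n + 1) * G = F * Q + ell lam mu ^ (n + 1) * R := by
  obtain ⟨a, b, hab⟩ := exists_linear_form hlm
  set L : MvPolynomial (Fin 2) k := C a * X 0 + C b * X 1 with hL
  have hLhom : L.IsHomogeneous 1 := (isHomogeneous_C_mul_X _ _).add (isHomogeneous_C_mul_X _ _)
  have hLev : evalPt k lam mu L = 1 := by simpa [evalPt, hL] using hab
  have hLpow (n : ℕ) (g : k) : (C g * L ^ n).IsHomogeneous n := by
    simpa using (hLhom.pow n).C_mul g
  -- One step: the multiple of `F` is chosen so that the difference vanishes at `(λ, μ)`.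
  have step (n : ℕ) (G : MvPolynomial (Fin 2) k) (hG : G.IsHomogeneous (e + 1 + n)) :
      ∃ G' : MvPolynomial (Fin 2) k, G'.IsHomogeneous (e + n) ∧
        C (evalPt k lam mu F) * G - F * (C (evalPt k lam mu G) * L ^ n) = ell lam mu * G' := by
    refine exists_eq_ell_mul hlm ?_ ?_
    · rw [show e + n + 1 = e + 1 + n by ring]
      exact (hG.C_mul _).sub (hF.mul (hLpow n _))
    · simp only [evalPt_sub, evalPt_mul, evalPt_pow, evalPt_C, hLev]
      ring
  induction n with
  | zero =>
    intro G hG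
    obtain ⟨G', hG', h⟩ := step 0 G hG
    exact ⟨C (evalPt k lam mu G) * L ^ 0, G', hLpow 0 _, hG', by linear_combination h⟩
  | succ n ih =>
    intro G hG
    obtain ⟨G', hG', h⟩ := step (n + 1) G hG
    obtain ⟨Q, R, hQ, hR, hQR⟩ := ih G' (by rwa [show e + 1 + n = e + (n + 1) by ring])
    refine ⟨C (evalPt k lam mu F ^ (n + 1)) * (C (evalPt k lam mu G) * L ^ (n + 1)) +
      ell lam mu * Q, R, ((hLpow (n + 1) _).C_mul _).add ?_, hR, ?_⟩
    · rw [add_comm n 1]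
      exact ell_isHomogeneous.mul hQ
    · rw [C_pow]
      linear_combination C (evalPt k lam mu F) ^ (n + 1) * h + ell lam mu * hQR

/-- Since `λX₁ - μX₀` does not divide `F`, its power can only divide `F * Q` by dividing `Q`, which
the degree of `Q` forbids unless `Q = 0`. -/
theorem eq_zero_of_mul_eq (hlm : (lam, mu) ≠ (0, 0)) {F R : MvPolynomial (Fin 2) k}
    (hF : evalPt k lam mu F ≠ 0) (n : ℕ) :
    ∀ Q : MvPolynomial (Fin 2) k, Q.IsHomogeneous n → F * Q = ell lam mu ^ (n + 1) * R →
      Q = 0 := by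
  have vanish (n : ℕ) (Q : MvPolynomial (Fin 2) k) (h : F * Q = ell lam mu ^ (n + 1) * R) :
      evalPt k lam mu Q = 0 := by
    have := congrArg (evalPt k lam mu) h
    rw [evalPt_mul, evalPt_mul, evalPt_pow, evalPt_ell, zero_pow n.succ_ne_zero, zero_mul] at this
    exact (mul_eq_zero.1 this).resolve_left hF
  induction n with
  | zero =>
    intro Q hQ h
    have hv := vanish 0 Q h
    rw [totalDegree_eq_zero_iff_eq_C.1 ((totalDegree_zero_iff_isHomogeneous _).2 hQ), evalPt_C] at hv
    rw [totalDegree_eq_zero_iff_eq_C.1 ((totalDegree_zero_iff_isHomogeneous _).2 hQ), hv, C_0]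
  | succ n ih =>
    intro Q hQ h
    obtain ⟨Q', hQ', rfl⟩ := exists_eq_ell_mul hlm hQ (vanish (n + 1) Q h)
    rw [ih Q' hQ' (mul_left_cancel₀ (ell_ne_zero hlm) (by linear_combination h)), mul_zero]

end Aux

/-- one step of the twisted Euclidean division for binary forms. Let `k` be
a field, `1 ≤ d₁ ≤ d₂`, `F, G` homogeneous of degrees `d₁, d₂`, and `(λ,μ) ≠ (0,0)`. Then
there are homogeneous `Q` of degree `d₂-d₁` and `R` of degree `d₁-1` with
`F(λ,μ)^{d₂-d₁+1}·G = F·Q + (λX₁-μX₀)^{d₂-d₁+1}·R`; moreover, if `F(λ,μ) ≠ 0`, the pair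
`(Q, R)` is unique. -/
theorem statement10 (k : Type) [Field k] (d₁ d₂ : ℕ) (hd₁ : 1 ≤ d₁) (hd : d₁ ≤ d₂)
    (F G : MvPolynomial (Fin 2) k)
    (hF : F.IsHomogeneous d₁) (hG : G.IsHomogeneous d₂)
    (lam mu : k) (hlm : (lam, mu) ≠ (0, 0)) :
    (∃ Q R : MvPolynomial (Fin 2) k,
      Q.IsHomogeneous (d₂ - d₁) ∧ R.IsHomogeneous (d₁ - 1) ∧
      C (evalPt k lam mu F) ^ (d₂ - d₁ + 1) * G
        = F * Q + (C lam * X 1 - C mu * X 0) ^ (d₂ - d₁ + 1) * R) ∧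
    (evalPt k lam mu F ≠ 0 →
      ∀ Q R Q' R' : MvPolynomial (Fin 2) k,
        Q.IsHomogeneous (d₂ - d₁) → R.IsHomogeneous (d₁ - 1) →
        C (evalPt k lam mu F) ^ (d₂ - d₁ + 1) * G
          = F * Q + (C lam * X 1 - C mu * X 0) ^ (d₂ - d₁ + 1) * R →
        Q'.IsHomogeneous (d₂ - d₁) → R'.IsHomogeneous (d₁ - 1) →
        C (evalPt k lam mu F) ^ (d₂ - d₁ + 1) * G
          = F * Q' + (C lam * X 1 - C mu * X 0) ^ (d₂ - d₁ + 1) * R' →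
        Q = Q' ∧ R = R') := by
  obtain ⟨e, rfl⟩ := Nat.exists_eq_add_of_le' hd₁
  obtain ⟨n, rfl⟩ := Nat.exists_eq_add_of_le hd
  rw [Nat.add_sub_cancel_left, Nat.add_sub_cancel]
  refine ⟨exists_division hlm hF n G hG, ?_⟩
  intro hF0 Q R Q' R' hQ _ h hQ' _ h'
  change _ = F * Q + ell lam mu ^ (n + 1) * R at h
  change _ = F * Q' + ell lam mu ^ (n + 1) * R' at h'
  have hQQ : Q = Q' := sub_eq_zero.1 <|
    eq_zero_of_mul_eq (R := R' - R) hlm hF0 n (Q - Q') (hQ.sub hQ')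
      (by linear_combination h' - h)
  subst hQQ
  exact ⟨rfl, mul_left_cancel₀ (pow_ne_zero (n + 1) (ell_ne_zero hlm))
    (by linear_combination h' - h)⟩

end
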